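/- arXiv:2402.06527 — 6 statements merged into one kernel-verified Lean document; each statement's English description precedes it below -/
import Mathlib

section
/- Let n ≥ 4, let Z ∈ ℝ^{n×4} be totally positive with rows Z_1,…,Z_n, and let X ∈ ℝ^{2×n} be totally nonnegative of rank 2. If for some i ∈ {1,…,n−1} the determinant of the 4×4 matrix whose rows are the two rows of X·Z followed by Z_i and Z_{i+1} is zero, then the 2×(n−2) submatrix of X obtained by deleting columns i and i+1 has rank at most 1. Likewise, if the determinant of the 4×4 matrix whose rows are the two rows of X·Z followed by Z_1 and Z_n is zero, then the submatrix of X obtained by deleting columns 1 and n has rank at most 1. -/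
/-!
Expanding the bracket in its first two rows (Cauchy–Binet) writes it as a sum over pairs `a, b` of
the minors `X 0 a * X 1 b - X 0 b * X 1 a` of `X` times the minors `⟨Z_a Z_b Z_i Z_j⟩` of `Z`.
If `i, j` are consecutive, or are the first and last index, then sorting `a < b, i < j` takes an
even permutation, so total positivity of `Z` makes `⟨Z_a Z_b Z_i Z_j⟩` positive when `a < b` avoid
`i, j`; it vanishes when `a` or `b` is one of `i, j`. Hence all terms of the sum are nonnegative,
and if the bracket vanishes then so does every `2×2` minor of `X` on columns away from `i, j`
(`rank_le_one_of_bracket_pos`), which bounds the rank by one (`rank_le_one_of_minors`).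
-/

/-- The determinant of the 4×4 matrix with the given four rows. -/
noncomputable def det4 (a b c d : Fin 4 → ℝ) : ℝ :=
  Matrix.det (Matrix.of ![a, b, c, d])

/-- `Z ∈ ℝ^{n×4}` is totally positive: every `4×4` minor formed by rows `i₁<i₂<i₃<i₄`
is positive. -/
def IsTotallyPositive4 {n : ℕ} (Z : Matrix (Fin n) (Fin 4) ℝ) : Prop :=
  ∀ r : Fin 4 → Fin n, StrictMono r → 0 < ((Z.submatrix r id).det)

/-- `X ∈ ℝ^{2×n}` is totally nonnegative: every `2×2` minor formed by columns `i<j`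
is nonnegative. -/
def IsTotallyNonneg2 {n : ℕ} (X : Matrix (Fin 2) (Fin n) ℝ) : Prop :=
  ∀ i j : Fin n, i < j → 0 ≤ X 0 i * X 1 j - X 0 j * X 1 i


/-- The Laplace expansion of `det4`; it reduces row-permutation identities to `ring`. -/
lemma det4_expand (a b c d : Fin 4 → ℝ) : det4 a b c d =
    a 0 * (b 1 * (c 2 * d 3 - c 3 * d 2) - b 2 * (c 1 * d 3 - c 3 * d 1)
      + b 3 * (c 1 * d 2 - c 2 * d 1))
    - a 1 * (b 0 * (c 2 * d 3 - c 3 * d 2) - b 2 * (c 0 * d 3 - c 3 * d 0)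
      + b 3 * (c 0 * d 2 - c 2 * d 0))
    + a 2 * (b 0 * (c 1 * d 3 - c 3 * d 1) - b 1 * (c 0 * d 3 - c 3 * d 0)
      + b 3 * (c 0 * d 1 - c 1 * d 0))
    - a 3 * (b 0 * (c 1 * d 2 - c 2 * d 1) - b 1 * (c 0 * d 2 - c 2 * d 0)
      + b 2 * (c 0 * d 1 - c 1 * d 0)) := by
  unfold det4
  simp [Matrix.det_succ_row_zero, Fin.sum_univ_succ, Fin.succAbove]
  ring

lemma det4_swap (a b c d : Fin 4 → ℝ) : det4 b a c d = - det4 a b c d := by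
  simp only [det4_expand]; ring

lemma det4_mul_row {n : ℕ} (X : Matrix (Fin 2) (Fin n) ℝ) (Z : Matrix (Fin n) (Fin 4) ℝ)
    (r : Fin 2) (b c d : Fin 4 → ℝ) :
    det4 ((X * Z) r) b c d = ∑ k, X r k * det4 (Z k) b c d := by
  simp only [det4_expand, Matrix.mul_apply, Finset.sum_mul, ← Finset.sum_sub_distrib,
    ← Finset.sum_add_distrib]
  exact Finset.sum_congr rfl fun k _ => by ring

lemma det4_mul_rows {n : ℕ} (X : Matrix (Fin 2) (Fin n) ℝ) (Z : Matrix (Fin n) (Fin 4) ℝ)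
    (c d : Fin 4 → ℝ) :
    det4 ((X * Z) 0) ((X * Z) 1) c d
      = ∑ a, ∑ b, X 0 a * X 1 b * det4 (Z a) (Z b) c d := by
  rw [det4_mul_row]
  refine Finset.sum_congr rfl fun a _ => ?_
  rw [det4_swap, det4_mul_row, ← Finset.sum_neg_distrib, Finset.mul_sum]
  refine Finset.sum_congr rfl fun b _ => ?_
  rw [det4_swap (Z a)]; ring

/-- The Cauchy–Binet expansion of the bracket, summed over ordered pairs so that each unordered
pair is counted twice. -/
lemma two_mul_det4_mul_rows {n : ℕ} (X : Matrix (Fin 2) (Fin n) ℝ)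
    (Z : Matrix (Fin n) (Fin 4) ℝ) (c d : Fin 4 → ℝ) :
    2 * det4 ((X * Z) 0) ((X * Z) 1) c d
      = ∑ a, ∑ b, (X 0 a * X 1 b - X 0 b * X 1 a) * det4 (Z a) (Z b) c d := by
  have h := det4_mul_rows X Z c d
  have h' := h
  rw [Finset.sum_comm] at h'
  rw [two_mul]
  nth_rewrite 1 [h]
  rw [h', ← Finset.sum_add_distrib]
  refine Finset.sum_congr rfl fun a _ => ?_
  rw [← Finset.sum_add_distrib]
  refine Finset.sum_congr rfl fun b _ => ?_
  rw [det4_swap (Z a) (Z b)]; ring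

lemma rank_le_one_of_minors {ι : Type*} [Fintype ι] (M : Matrix (Fin 2) ι ℝ)
    (h : ∀ a b, M 0 a * M 1 b - M 0 b * M 1 a = 0) : M.rank ≤ 1 := by
  by_cases h0 : ∃ c, M 0 c ≠ 0
  · obtain ⟨c, hc⟩ := h0
    -- Every column is the multiple `M 0 b / M 0 c` of the column `c`.
    have : M = Matrix.vecMulVec (fun r => M r c) (fun b => M 0 b / M 0 c) := by
      ext r b
      fin_cases r
      · simp [Matrix.vecMulVec_apply]; field_simp
      · simp [Matrix.vecMulVec_apply]; field_simp; linarith [h c b]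
    rw [this]; exact Matrix.rank_vecMulVec_le _ _
  · push Not at h0
    have : M = Matrix.vecMulVec ![0, 1] (M 1) := by
      ext r b
      fin_cases r <;> simp [Matrix.vecMulVec_apply, h0]
    rw [this]; exact Matrix.rank_vecMulVec_le _ _

/-- The vanishing argument for any pair `i, j` whose brackets `⟨Z_a Z_b Z_i Z_j⟩` with `a < b` away
from `i, j` are positive: a vanishing sum of nonnegative terms has only zero terms. -/
lemma rank_le_one_of_bracket_pos {n : ℕ} (Z : Matrix (Fin n) (Fin 4) ℝ)
    (X : Matrix (Fin 2) (Fin n) ℝ) (hX : IsTotallyNonneg2 X) (i j : Fin n)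
    (hpos : ∀ a b : Fin n, a < b → a ≠ i → a ≠ j → b ≠ i → b ≠ j →
      0 < det4 (Z a) (Z b) (Z i) (Z j))
    (hdet : det4 ((X * Z) 0) ((X * Z) 1) (Z i) (Z j) = 0) :
    Matrix.rank (Matrix.of fun (r : Fin 2) (c : {k : Fin n // k ≠ i ∧ k ≠ j}) =>
        X r c.val) ≤ 1 := by
  have hnn : ∀ a b : Fin n, a < b → 0 ≤ det4 (Z a) (Z b) (Z i) (Z j) := by
    intro a b hab
    by_cases h : a ≠ i ∧ a ≠ j ∧ b ≠ i ∧ b ≠ j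
    · exact (hpos a b hab h.1 h.2.1 h.2.2.1 h.2.2.2).le
    · have h' : a = i ∨ a = j ∨ b = i ∨ b = j := by tauto
      apply le_of_eq
      rcases h' with rfl | rfl | rfl | rfl <;> simp only [det4_expand] <;> ring
  have hterm : ∀ a b : Fin n,
      0 ≤ (X 0 a * X 1 b - X 0 b * X 1 a) * det4 (Z a) (Z b) (Z i) (Z j) := by
    intro a b
    rcases lt_trichotomy a b with hab | rfl | hab
    · exact mul_nonneg (hX a b hab) (hnn a b hab)
    · simp
    · have := mul_nonneg (hX b a hab) (hnn b a hab)
      rw [det4_swap (Z a) (Z b)] at this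
      linarith
  have hsum := two_mul_det4_mul_rows X Z (Z i) (Z j)
  rw [hdet, mul_zero, eq_comm,
    Finset.sum_eq_zero_iff_of_nonneg fun a _ => Finset.sum_nonneg fun b _ => hterm a b] at hsum
  have hzero : ∀ a b : Fin n,
      (X 0 a * X 1 b - X 0 b * X 1 a) * det4 (Z a) (Z b) (Z i) (Z j) = 0 := by
    intro a b
    have := hsum a (Finset.mem_univ _)
    rw [Finset.sum_eq_zero_iff_of_nonneg fun b _ => hterm a b] at this
    exact this b (Finset.mem_univ _)
  apply rank_le_one_of_minors
  rintro ⟨a, hai, haj⟩ ⟨b, hbi, hbj⟩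
  simp only [Matrix.of_apply]
  rcases lt_trichotomy a b with hab | rfl | hab
  · exact (mul_eq_zero.mp (hzero a b)).resolve_right (hpos a b hab hai haj hbi hbj).ne'
  · ring
  · have := (mul_eq_zero.mp (hzero b a)).resolve_right (hpos b a hab hbi hbj hai haj).ne'
    linarith

lemma det4_pos {n : ℕ} {Z : Matrix (Fin n) (Fin 4) ℝ} (hZ : IsTotallyPositive4 Z)
    {a b c d : Fin n} (hab : a < b) (hbc : b < c) (hcd : c < d) :
    0 < det4 (Z a) (Z b) (Z c) (Z d) := by
  have hmono : StrictMono ![a, b, c, d] := by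
    rw [Fin.strictMono_iff_lt_succ]
    intro k
    fin_cases k
    · exact hab
    · exact hbc
    · exact hcd
  have h : Z.submatrix ![a, b, c, d] id = Matrix.of ![Z a, Z b, Z c, Z d] := by
    ext r k
    fin_cases r <;> rfl
  have := hZ _ hmono
  rwa [h] at this

/-- Lemma on vanishing brackets. If `Z` is totally positive, `X` is totally
nonnegative of rank 2, and the bracket `⟨(X·Z) Z_i Z_{i+1}⟩` vanishes for consecutive rows
`Z_i, Z_{i+1}` (including the pair `Z_1, Z_n`), then the submatrix of `X` obtained by deleting
the corresponding two columns has rank at most 1. -/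
theorem stmt1 (n : ℕ) (hn : 4 ≤ n)
    (Z : Matrix (Fin n) (Fin 4) ℝ) (hZ : IsTotallyPositive4 Z)
    (X : Matrix (Fin 2) (Fin n) ℝ) (hX : IsTotallyNonneg2 X)
    (hrk : X.rank = 2) :
    (∀ i j : Fin n, (i : ℕ) + 1 = (j : ℕ) →
      det4 ((X * Z) 0) ((X * Z) 1) (Z i) (Z j) = 0 →
      Matrix.rank (Matrix.of fun (r : Fin 2) (c : {k : Fin n // k ≠ i ∧ k ≠ j}) =>
        X r c.val) ≤ 1) ∧
    (det4 ((X * Z) 0) ((X * Z) 1) (Z ⟨0, by omega⟩) (Z ⟨n - 1, by omega⟩) = 0 →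
      Matrix.rank (Matrix.of fun (r : Fin 2)
        (c : {k : Fin n // k ≠ ⟨0, by omega⟩ ∧ k ≠ ⟨n - 1, by omega⟩}) =>
        X r c.val) ≤ 1) := by
  constructor
  · intro i j hij hdet
    refine rank_le_one_of_bracket_pos Z X hX i j ?_ hdet
    intro a b hab hai haj hbi hbj
    -- As `j = i + 1`, the pair `i, j` lies above, between or below `a, b`, never interleaved.
    have h : b < i ∨ (a < i ∧ j < b) ∨ j < a := by
      simp only [Fin.lt_def, ne_eq, Fin.ext_iff] at *
      omega
    have hij' : i < j := by rw [Fin.lt_def]; omega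
    rcases h with h | ⟨h1, h2⟩ | h
    · exact det4_pos hZ hab h hij'
    · have := det4_pos hZ h1 hij' h2
      simp only [det4_expand] at this ⊢
      linarith
    · have := det4_pos hZ hij' h hab
      simp only [det4_expand] at this ⊢
      linarith
  · intro hdet
    refine rank_le_one_of_bracket_pos Z X hX _ _ ?_ hdet
    intro a b hab hai haj hbi hbj
    have h1 : (⟨0, by omega⟩ : Fin n) < a := by
      simp only [Fin.lt_def, ne_eq, Fin.ext_iff] at *
      omega
    have h2 : b < (⟨n - 1, by omega⟩ : Fin n) := by
      simp only [Fin.lt_def, ne_eq, Fin.ext_iff] at *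
      omega
    have := det4_pos hZ h1 hab h2
    simp only [det4_expand] at this ⊢
    linarith
end

section
/- Let n ≥ 4 and let z_1,…,z_n be vectors in ℝ^2 such that det(z_i, z_{i+1}) > 0 for all i = 1,…,n−1, where det(u,v) denotes the determinant of the 2×2 matrix with columns u and v. Let j be an index with 3 ≤ j ≤ n−1 such that det(z_1, z_j) = 0 and det(z_1, z_{j−1}) ≠ 0. Then det(z_1, z_{j−1}) · det(z_1, z_{j+1}) < 0. -/
/-!
Put `a = z 1` and let `b, c, d` be `z (j - 1), z j, z (j + 1)`. The Plücker relation
`[ab][cd] - [ac][bd] + [ad][bc] = 0` loses its middle term because `[ac] = 0`.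
Multiplying what remains by `[ab]` gives `[ab][ad][bc] = -[ab]²[cd]`, which is negative since
`[cd] > 0` and `[ab] ≠ 0`; as `[bc] > 0`, the product `[ab][ad]` is negative.
-/

/-- The determinant of the 2×2 matrix with columns `u` and `v`. -/
noncomputable def det2 (u v : ℝ × ℝ) : ℝ := u.1 * v.2 - u.2 * v.1

/-- The three-term Plücker relation for four vectors in the plane. -/
theorem det2_plucker (a b c d : ℝ × ℝ) :
    det2 a b * det2 c d - det2 a c * det2 b d + det2 a d * det2 b c = 0 := by
  unfold det2
  ring

/-- Let `n ≥ 4` and `z_1, …, z_n ∈ ℝ²` with `det(z_i, z_{i+1}) > 0` for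
`i = 1, …, n-1`. If `3 ≤ j ≤ n-1` is such that `det(z_1, z_j) = 0` and
`det(z_1, z_{j-1}) ≠ 0`, then `det(z_1, z_{j-1}) · det(z_1, z_{j+1}) < 0`. -/
theorem stmt6 (n : ℕ) (hn : 4 ≤ n) (z : ℕ → ℝ × ℝ)
    (hcons : ∀ i : ℕ, 1 ≤ i → i ≤ n - 1 → 0 < det2 (z i) (z (i + 1)))
    (j : ℕ) (hj1 : 3 ≤ j) (hj2 : j ≤ n - 1)
    (h0 : det2 (z 1) (z j) = 0)
    (hne : det2 (z 1) (z (j - 1)) ≠ 0) :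
    det2 (z 1) (z (j - 1)) * det2 (z 1) (z (j + 1)) < 0 := by
  have hbc : 0 < det2 (z (j - 1)) (z j) := by
    have h := hcons (j - 1) (by omega) (by omega)
    rwa [Nat.sub_add_cancel (by omega : 1 ≤ j)] at h
  have hcd : 0 < det2 (z j) (z (j + 1)) := hcons j (by omega) hj2
  have hp := det2_plucker (z 1) (z (j - 1)) (z j) (z (j + 1))
  rw [h0, zero_mul, sub_zero] at hp
  have hpos : 0 < det2 (z 1) (z (j - 1)) ^ 2 * det2 (z j) (z (j + 1)) := by positivity
  refine neg_of_mul_neg_left (b := det2 (z (j - 1)) (z j)) ?_ hbc.le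
  linear_combination hpos + det2 (z 1) (z (j - 1)) * hp
end

section
/- Let n ≥ 4 and let X ∈ ℝ^{2×n} be totally nonnegative with rows X_1, X_2. For i ∈ {1,…,n−1}, let C_i be the 4×n matrix whose rows are X_1, X_2, e_i, e_{i+1}, where e_k ∈ ℝ^n is the k-th standard basis (row) vector; and let C' be the 4×n matrix whose rows are X_1, X_2, e_1, e_n. Then every 4×4 minor of C_i formed by columns j₁<j₂<j₃<j₄ is nonnegative, and likewise every 4×4 minor of C' formed by columns j₁<j₂<j₃<j₄ is nonnegative. -/
/-- Laplace expansion of a `4×4` determinant along its first two rows. -/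
lemma det_laplace_two_rows (M : Matrix (Fin 4) (Fin 4) ℝ) :
    M.det =
      (M 0 0 * M 1 1 - M 0 1 * M 1 0) * (M 2 2 * M 3 3 - M 2 3 * M 3 2)
      - (M 0 0 * M 1 2 - M 0 2 * M 1 0) * (M 2 1 * M 3 3 - M 2 3 * M 3 1)
      + (M 0 0 * M 1 3 - M 0 3 * M 1 0) * (M 2 1 * M 3 2 - M 2 2 * M 3 1)
      + (M 0 1 * M 1 2 - M 0 2 * M 1 1) * (M 2 0 * M 3 3 - M 2 3 * M 3 0)
      - (M 0 1 * M 1 3 - M 0 3 * M 1 1) * (M 2 0 * M 3 2 - M 2 2 * M 3 0)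
      + (M 0 2 * M 1 3 - M 0 3 * M 1 2) * (M 2 0 * M 3 1 - M 2 1 * M 3 0) := by
  simp [Matrix.det_succ_row_zero, Fin.sum_univ_succ, Fin.succAbove]
  ring

/-- For `i < j`, the minor of the rows `e_i, e_j` on columns `a < b` is the indicator
of `(a, b) = (i, j)`. -/
lemma minor_single_single {n : ℕ} {i j a b : Fin n} (hij : i < j) (hab : a < b) :
    (Pi.single i 1 : Fin n → ℝ) a * (Pi.single j 1 : Fin n → ℝ) b
      - (Pi.single i 1 : Fin n → ℝ) b * (Pi.single j 1 : Fin n → ℝ) a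
      = if a = i ∧ b = j then 1 else 0 := by
  have h : ¬ (b = i ∧ a = j) := by
    rintro ⟨rfl, rfl⟩
    exact lt_asymm hij hab
  simp only [Pi.single_apply]
  grind

/-- The minor is nonnegative as soon as the two negatively signed Laplace terms vanish. -/
lemma minor_nonneg {n : ℕ} {X : Matrix (Fin 2) (Fin n) ℝ} (hX : IsTotallyNonneg2 X)
    {i j : Fin n} (hij : i < j) {c : Fin 4 → Fin n} (hc : StrictMono c)
    (h02 : ¬ (c 0 = i ∧ c 2 = j)) (h13 : ¬ (c 1 = i ∧ c 3 = j)) :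
    0 ≤ ((Matrix.of ![X 0, X 1, Pi.single i 1, Pi.single j 1] :
      Matrix (Fin 4) (Fin n) ℝ).submatrix id c).det := by
  have hm (p q : Fin 4) (h : p < q) := hX (c p) (c q) (hc h)
  have hd (p q : Fin 4) (h : p < q) := minor_single_single hij (hc h)
  have hpos (p q r s : Fin 4) (h : p < q) :
      0 ≤ (X 0 (c p) * X 1 (c q) - X 0 (c q) * X 1 (c p)) *
        (if c r = i ∧ c s = j then 1 else 0) :=
    mul_nonneg (hm p q h) (by split_ifs <;> norm_num)
  rw [det_laplace_two_rows]
  simp only [Matrix.submatrix_apply, Matrix.of_apply, id, Matrix.cons_val]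
  rw [hd 0 1 (by decide), hd 0 2 (by decide), hd 0 3 (by decide), hd 1 2 (by decide),
    hd 1 3 (by decide), hd 2 3 (by decide), if_neg h02, if_neg h13]
  linarith [hpos 0 1 2 3 (by decide), hpos 0 3 1 2 (by decide), hpos 1 2 0 3 (by decide),
    hpos 2 3 0 1 (by decide)]

/-- For a totally nonnegative `X ∈ ℝ^{2×n}` with rows `X₁, X₂`, every 4×4
minor (taken with columns `j₁<j₂<j₃<j₄`) of the 4×n matrix with rows `X₁, X₂, e_i, e_{i+1}`
(with `e_k` the `k`-th standard basis row vector, `i = 1,…,n-1`) is nonnegative, and likewise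
for the 4×n matrix with rows `X₁, X₂, e_1, e_n`. -/
theorem stmt9 (n : ℕ) (hn : 4 ≤ n)
    (X : Matrix (Fin 2) (Fin n) ℝ) (hX : IsTotallyNonneg2 X) :
    (∀ i j : Fin n, (i : ℕ) + 1 = (j : ℕ) →
      ∀ c : Fin 4 → Fin n, StrictMono c →
        0 ≤ ((Matrix.of ![X 0, X 1, Pi.single i 1, Pi.single j 1] :
          Matrix (Fin 4) (Fin n) ℝ).submatrix id c).det) ∧
    (∀ c : Fin 4 → Fin n, StrictMono c →
      0 ≤ ((Matrix.of ![X 0, X 1, Pi.single ⟨0, by omega⟩ 1, Pi.single ⟨n - 1, by omega⟩ 1] :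
        Matrix (Fin 4) (Fin n) ℝ).submatrix id c).det) := by
  have hlt (c : Fin 4 → Fin n) (hc : StrictMono c) :
      (c 0 : ℕ) < c 1 ∧ (c 1 : ℕ) < c 2 ∧ (c 2 : ℕ) < c 3 :=
    ⟨hc (by decide), hc (by decide), hc (by decide)⟩
  refine ⟨fun i j hij c hc => ?_, fun c hc => ?_⟩
  · obtain ⟨h01, h12, h23⟩ := hlt c hc
    refine minor_nonneg hX (Fin.lt_def.2 (by omega)) hc ?_ ?_ <;>
    · rintro ⟨rfl, rfl⟩
      omega
  · obtain ⟨h01, h12, h23⟩ := hlt c hc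
    have h3 := (c 3).isLt
    refine minor_nonneg hX (Fin.lt_def.2 (show 0 < n - 1 by omega)) hc ?_ ?_ <;>
    · simp only [Fin.ext_iff]
      omega
end

section
/- Let n ≥ 8. The number of 4-element subsets {i,j,k,l} of ℤ/nℤ such that the four sets {i,i+1}, {j,j+1}, {k,k+1}, {l,l+1} (computed in ℤ/nℤ) are pairwise disjoint equals n(n−5)(n−6)(n−7)/24. -/
/-! A 4-subset `S` of `ℤ/nℤ` is admissible exactly when it contains no two cyclically consecutive
elements. Taking representatives in `{0, …, n - 1}`, either `n - 1 ∉ S`, and `S` is any 4-subset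
of `[0, n - 1)` without consecutive elements, or `n - 1 ∈ S`, and `S` is `n - 1` together with a
3-subset of `[1, n - 2)` without consecutive elements. An interval of length `m` has
`(m + 1 - k).choose k` such `k`-subsets (`card_sparse`, by Pascal's rule), so the count is
`(n - 4).choose 4 + (n - 5).choose 3 = n (n - 5) (n - 6) (n - 7) / 24`.
-/

/-- The `k`-element subsets of `[a, b)` containing no two consecutive integers. -/
def sparse (a b k : ℕ) : Finset (Finset ℕ) :=
  ((Finset.Ico a b).powersetCard k).filter fun S => ∀ i ∈ S, i + 1 ∉ S

lemma mem_sparse {a b k : ℕ} {S : Finset ℕ} :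
    S ∈ sparse a b k ↔ (∀ i ∈ S, a ≤ i ∧ i < b) ∧ S.card = k ∧ ∀ i ∈ S, i + 1 ∉ S := by
  simp [sparse, Finset.mem_powersetCard, Finset.subset_iff, and_assoc]

/-- Adjoining `c` to the sets of a family, none of which contains `c`, keeps them distinct. -/
lemma card_image_insert {F : Finset (Finset ℕ)} {c : ℕ} (h : ∀ S ∈ F, c ∉ S) :
    (F.image (insert c)).card = F.card := by
  refine Finset.card_image_of_injOn fun S hS T hT hST => ?_
  rw [← Finset.erase_insert (h S hS), ← Finset.erase_insert (h T hT)]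
  exact congrArg (fun U => U.erase c) hST

/-- The sparse subsets of an interval of length `m + 2`, split by whether they contain its last
element. -/
lemma sparse_succ (a m k : ℕ) : sparse a (a + (m + 2)) (k + 1) =
    sparse a (a + (m + 1)) (k + 1) ∪ (sparse a (a + m) k).image (insert (a + m + 1)) := by
  ext S
  simp only [Finset.mem_union, Finset.mem_image, mem_sparse]
  constructor
  · rintro ⟨h1, h2, h3⟩
    by_cases hc : a + m + 1 ∈ S
    · refine Or.inr ⟨S.erase (a + m + 1), ⟨?_, ?_, ?_⟩, Finset.insert_erase hc⟩
      · intro i hi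
        obtain ⟨hne, hi⟩ := Finset.mem_erase.1 hi
        have hm : i ≠ a + m := by rintro rfl; exact h3 _ hi hc
        have := h1 i hi
        omega
      · rw [Finset.card_erase_of_mem hc, h2]; rfl
      · intro i hi hi'
        exact h3 i (Finset.mem_of_mem_erase hi) (Finset.mem_of_mem_erase hi')
    · refine Or.inl ⟨fun i hi => ?_, h2, h3⟩
      have hne : i ≠ a + m + 1 := by rintro rfl; exact hc hi
      have := h1 i hi
      omega
  · rintro (⟨h1, h2, h3⟩ | ⟨T, ⟨h1, h2, h3⟩, rfl⟩)
    · exact ⟨fun i hi => by have := h1 i hi; omega, h2, h3⟩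
    · have hc : a + m + 1 ∉ T := fun h => by have := h1 _ h; omega
      refine ⟨?_, by rw [Finset.card_insert_of_notMem hc, h2], ?_⟩
      · intro i hi
        rcases Finset.mem_insert.1 hi with rfl | hi
        · omega
        · have := h1 i hi; omega
      · intro i hi hi'
        rcases Finset.mem_insert.1 hi with rfl | hi <;>
          rcases Finset.mem_insert.1 hi' with h | hi'
        · omega
        · have := h1 _ hi'; omega
        · have := h1 _ hi; omega
        · exact h3 i hi hi'

lemma card_sparse (a m k : ℕ) : (sparse a (a + m) k).card = (m + 1 - k).choose k := by
  induction m using Nat.strong_induction_on generalizing k with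
  | _ m ih =>
    rcases k with _ | k
    · have : sparse a (a + m) 0 = {∅} := by
        ext S
        simp only [mem_sparse, Finset.card_eq_zero, Finset.mem_singleton]
        exact ⟨fun h => h.2.1, by rintro rfl; simp⟩
      simp [this]
    rcases m with _ | _ | m
    · simp [sparse]
    · rcases k with _ | k
      · have : sparse a (a + 1) 1 = {{a}} := by
          ext S
          simp only [mem_sparse, Finset.mem_singleton]
          constructor
          · rintro ⟨h1, h2, -⟩
            obtain ⟨x, rfl⟩ := Finset.card_eq_one.1 h2
            have := h1 x (Finset.mem_singleton_self x)
            rw [show x = a by omega]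
          · rintro rfl
            simp
        simp [this]
      · simp [sparse]
    · rw [show m + 1 + 1 = m + 2 from rfl, sparse_succ, Finset.card_union_of_disjoint,
        card_image_insert, ih (m + 1) (by omega), ih m (by omega)]
      · rcases le_or_gt k (m + 1) with h | h
        · rw [show m + 2 + 1 - (k + 1) = (m + 1 - k) + 1 by omega,
            show m + 1 + 1 - (k + 1) = m + 1 - k by omega, Nat.choose_succ_succ, add_comm]
        · obtain ⟨j, rfl⟩ : ∃ j, k = j + 1 := ⟨k - 1, by omega⟩
          simp [show m + 1 - j = 0 by omega, show m - j = 0 by omega]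
      · intro S hS h
        have := (mem_sparse.1 hS).1 _ h
        omega
      · rw [Finset.disjoint_left]
        intro S hS hS'
        obtain ⟨T, -, rfl⟩ := Finset.mem_image.1 hS'
        have := (mem_sparse.1 hS).1 _ (Finset.mem_insert_self _ _)
        omega

/-- Disjointness of the cyclic pairs of distinct elements of `S` means that `S` contains no two
cyclically consecutive elements. -/
lemma pairs_disjoint_iff {n : ℕ} (hn : 1 < n) (S : Finset (ZMod n)) :
    (∀ i ∈ S, ∀ j ∈ S, i ≠ j → ({i, i + 1} : Finset (ZMod n)) ∩ {j, j + 1} = ∅) ↔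
      ∀ i ∈ S, i + 1 ∉ S := by
  have : Fact (1 < n) := ⟨hn⟩
  constructor
  · intro h i hi hi'
    have h1 := h i hi _ hi' (by simp)
    have h2 : i + 1 ∈ ({i, i + 1} : Finset (ZMod n)) ∩ {i + 1, i + 1 + 1} := by simp
    rw [h1] at h2
    simp at h2
  · intro h i hi j hj hij
    rw [Finset.eq_empty_iff_forall_notMem]
    intro x hx
    simp only [Finset.mem_inter, Finset.mem_insert, Finset.mem_singleton] at hx
    rcases hx with ⟨rfl | rfl, hx | hx⟩
    · exact hij hx
    · exact h j hj (hx ▸ hi)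
    · exact h i hi (hx ▸ hj)
    · exact hij (add_right_cancel hx)

/-- Sets of representatives in `[0, n)` of the cyclically sparse 4-sets, split by whether they
contain `n - 1`; here `n = m + 8`. -/
lemma cyclic_iff (m : ℕ) (T : Finset ℕ) :
    ((∀ i ∈ T, i < m + 8) ∧ T.card = 4 ∧ ∀ i ∈ T, (i + 1) % (m + 8) ∉ T) ↔
      T ∈ sparse 0 (0 + (m + 7)) 4 ∪ (sparse 1 (1 + (m + 5)) 3).image (insert (m + 7)) := by
  simp only [Finset.mem_union, Finset.mem_image, mem_sparse]
  constructor
  · rintro ⟨h1, h2, h3⟩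
    have h4 : ∀ i ∈ T, i + 1 ∉ T := fun i hi hi' =>
      h3 i hi (by rwa [Nat.mod_eq_of_lt (h1 _ hi')])
    by_cases hc : m + 7 ∈ T
    · have h0 : 0 ∉ T := by simpa using h3 _ hc
      refine Or.inr ⟨T.erase (m + 7), ⟨?_, ?_, ?_⟩, Finset.insert_erase hc⟩
      · intro i hi
        obtain ⟨hne, hi⟩ := Finset.mem_erase.1 hi
        have ha : i ≠ m + 6 := by rintro rfl; exact h4 _ hi hc
        have hb : i ≠ 0 := by rintro rfl; exact h0 hi
        have := h1 i hi
        omega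
      · rw [Finset.card_erase_of_mem hc, h2]
      · intro i hi hi'
        exact h4 i (Finset.mem_of_mem_erase hi) (Finset.mem_of_mem_erase hi')
    · refine Or.inl ⟨fun i hi => ?_, h2, h4⟩
      have hne : i ≠ m + 7 := by rintro rfl; exact hc hi
      have := h1 i hi
      omega
  · rintro (⟨h1, h2, h3⟩ | ⟨U, ⟨h1, h2, h3⟩, rfl⟩)
    · refine ⟨fun i hi => by have := h1 i hi; omega, h2, fun i hi => ?_⟩
      have := h1 i hi
      rw [Nat.mod_eq_of_lt (by omega)]
      exact h3 i hi
    · have hc : m + 7 ∉ U := fun h => by have := h1 _ h; omega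
      refine ⟨?_, by rw [Finset.card_insert_of_notMem hc, h2], ?_⟩
      · intro i hi
        rcases Finset.mem_insert.1 hi with rfl | hi
        · omega
        · have := h1 i hi; omega
      · intro i hi hi'
        rcases Finset.mem_insert.1 hi with rfl | hi
        · rw [show m + 7 + 1 = m + 8 from rfl, Nat.mod_self] at hi'
          rcases Finset.mem_insert.1 hi' with h | hi'
          · omega
          · have := h1 _ hi'; omega
        · have := h1 i hi
          rw [Nat.mod_eq_of_lt (by omega)] at hi'
          rcases Finset.mem_insert.1 hi' with h | hi'
          · omega
          · exact h3 i hi hi'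

lemma choose_add_choose (m : ℕ) : (m + 4).choose 4 + (m + 3).choose 3 =
    (m + 8) * (m + 3) * (m + 2) * (m + 1) / 24 := by
  have h3 := Nat.descFactorial_eq_factorial_mul_choose (m + 3) 3
  have h4 := Nat.descFactorial_eq_factorial_mul_choose (m + 4) 4
  simp only [Nat.descFactorial_succ, Nat.descFactorial_zero, Nat.factorial,
    show m + 3 - 2 = m + 1 by omega, show m + 3 - 1 = m + 2 by omega,
    show m + 4 - 3 = m + 1 by omega, show m + 4 - 2 = m + 2 by omega,
    show m + 4 - 1 = m + 3 by omega, Nat.sub_zero] at h3 h4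
  symm
  apply Nat.div_eq_of_eq_mul_right (by norm_num)
  linarith

/-- For `n ≥ 8`, the number of 4-element subsets `{i,j,k,l}` of `ℤ/nℤ` such
that the cyclic pairs `{i,i+1}`, `{j,j+1}`, `{k,k+1}`, `{l,l+1}` are pairwise disjoint equals
`n(n−5)(n−6)(n−7)/24`. -/
theorem stmt11 (n : ℕ) (hn : 8 ≤ n) :
    Set.ncard {S : Finset (ZMod n) | S.card = 4 ∧
      ∀ i ∈ S, ∀ j ∈ S, i ≠ j → ({i, i + 1} : Finset (ZMod n)) ∩ {j, j + 1} = ∅} =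
    n * (n - 5) * (n - 6) * (n - 7) / 24 := by
  obtain ⟨m, rfl⟩ : ∃ m, n = m + 8 := ⟨n - 8, by omega⟩
  have : Fact (1 < m + 8) := ⟨by omega⟩
  have hinj : Function.Injective (ZMod.val : ZMod (m + 8) → ℕ) := ZMod.val_injective _
  have hval : ∀ i : ZMod (m + 8), (i + 1).val = (i.val + 1) % (m + 8) := fun i => by
    rw [ZMod.val_add, ZMod.val_one]
  simp only [pairs_disjoint_iff (show 1 < m + 8 by omega)]
  rw [← Set.ncard_image_of_injective _ (Finset.image_injective hinj)]
  have hset : Finset.image ZMod.val '' {S : Finset (ZMod (m + 8)) | S.card = 4 ∧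
      ∀ i ∈ S, i + 1 ∉ S} = ↑(sparse 0 (0 + (m + 7)) 4 ∪
        (sparse 1 (1 + (m + 5)) 3).image (insert (m + 7))) := by
    ext T
    rw [Finset.mem_coe, ← cyclic_iff]
    constructor
    · rintro ⟨S, ⟨h1, h2⟩, rfl⟩
      refine ⟨?_, by rw [Finset.card_image_of_injective _ hinj, h1], ?_⟩
      · intro i hi
        obtain ⟨x, -, rfl⟩ := Finset.mem_image.1 hi
        exact ZMod.val_lt x
      · intro i hi
        obtain ⟨x, hx, rfl⟩ := Finset.mem_image.1 hi
        rw [← hval, hinj.mem_finset_image]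
        exact h2 x hx
    · rintro ⟨h1, h2, h3⟩
      have hT : (T.image (Nat.cast : ℕ → ZMod (m + 8))).image ZMod.val = T := by
        rw [Finset.image_image]
        conv_rhs => rw [← Finset.image_id (s := T)]
        exact Finset.image_congr fun i hi => ZMod.val_cast_of_lt (h1 i hi)
      refine ⟨T.image Nat.cast, ⟨?_, ?_⟩, hT⟩
      · rw [← Finset.card_image_of_injective _ hinj, hT, h2]
      · intro x hx hx'
        rw [← hinj.mem_finset_image, hT] at hx hx'
        rw [hval] at hx'
        exact h3 _ hx hx'
  rw [hset, Set.ncard_coe_finset, Finset.card_union_of_disjoint, card_image_insert, card_sparse,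
    card_sparse, show m + 8 - 5 = m + 3 by omega, show m + 8 - 6 = m + 2 by omega,
    show m + 8 - 7 = m + 1 by omega]
  · exact choose_add_choose m
  · intro S hS h
    have := (mem_sparse.1 hS).1 _ h
    omega
  · rw [Finset.disjoint_left]
    intro S hS hS'
    obtain ⟨T, -, rfl⟩ := Finset.mem_image.1 hS'
    have := (mem_sparse.1 hS).1 _ (Finset.mem_insert_self _ _)
    omega
end

section
/- Let n ≥ 4 and define a simple graph G whose vertices are the 2-element subsets {i,j} of ℤ/nℤ, with the following edges: {i,j} is adjacent to {i,j+1} for every pair of residues i, j with i ∉ {j, j+1} and {i,j} ≠ {i,j+1}; and {i−1,i} is adjacent to {i,i+1} for every residue i (all arithmetic in ℤ/nℤ). Then G is connected. -/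
/-!
Every residue pair can be written `{a, a + (k + 1)}` with `k + 1 < n`. Keeping `a` fixed and lowering
the second element one step at a time, which never hits `a`, connects it to the pair
`{a, a + 1}` of cyclic neighbours (`reachable_of_pair`). The edges `{i - 1, i} — {i, i + 1}` link
all pairs of neighbours into one cycle (`reachable_consecutive`).
-/

theorem natCast_succ_ne_zero {n k : ℕ} (hk : k + 1 < n) : ((k : ZMod n) + 1) ≠ 0 := by
  intro h
  have h' : ((k + 1 : ℕ) : ZMod n) = 0 := by push_cast; exact h
  rw [ZMod.natCast_eq_zero_iff] at h'
  exact absurd (Nat.le_of_dvd (Nat.succ_pos k) h') (by omega)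

/-- The hypothesis `h` holds in the graph of the theorem: it is the first family of edges. -/
theorem reachable_of_pair {n : ℕ} (G : SimpleGraph {S : Finset (ZMod n) // S.card = 2})
    (h : ∀ i j : ZMod n, i ≠ j → i ≠ j + 1 → ∀ S T : {S : Finset (ZMod n) // S.card = 2},
      S.1 = {i, j} → T.1 = {i, j + 1} → G.Reachable S T)
    (a : ZMod n) (S : {S : Finset (ZMod n) // S.card = 2}) (hS : S.1 = {a, a + 1})
    (k : ℕ) (hk : k + 1 < n) (T : {S : Finset (ZMod n) // S.card = 2})
    (hT : T.1 = {a, a + (k + 1)}) : G.Reachable S T := by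
  induction k generalizing T with
  | zero =>
    have : S = T := Subtype.ext (by rw [hS, hT]; simp)
    rw [this]
  | succ k ih =>
    have h1 : a ≠ a + ((k : ZMod n) + 1) := by
      simpa using natCast_succ_ne_zero (n := n) (k := k) (by omega)
    have h2 : a ≠ a + ((k : ZMod n) + 1) + 1 := by
      have := natCast_succ_ne_zero hk
      push_cast at this
      rw [add_assoc]
      simpa using this
    refine (ih (by omega) ⟨{a, a + ((k : ZMod n) + 1)}, Finset.card_pair h1⟩ rfl).trans
      (h a _ h1 h2 _ _ rfl ?_)
    rw [hT]
    push_cast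
    rw [add_assoc a]

/-- The hypothesis `h` holds in the graph of the theorem: it is the second family of edges. -/
theorem reachable_consecutive {n : ℕ} (hn : 2 ≤ n)
    (G : SimpleGraph {S : Finset (ZMod n) // S.card = 2})
    (h : ∀ i : ZMod n, ∀ S T : {S : Finset (ZMod n) // S.card = 2},
      S.1 = {i - 1, i} → T.1 = {i, i + 1} → G.Reachable S T)
    (S : {S : Finset (ZMod n) // S.card = 2}) (hS : S.1 = {0, 1})
    (k : ℕ) (T : {S : Finset (ZMod n) // S.card = 2})
    (hT : T.1 = {(k : ZMod n), (k : ZMod n) + 1}) : G.Reachable S T := by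
  induction k generalizing T with
  | zero =>
    have : S = T := Subtype.ext (by rw [hS, hT]; simp)
    rw [this]
  | succ k ih =>
    have h1 : (k : ZMod n) ≠ k + 1 := by
      simpa using natCast_succ_ne_zero (n := n) (k := 0) (by omega)
    refine (ih ⟨{(k : ZMod n), (k : ZMod n) + 1}, Finset.card_pair h1⟩ rfl).trans
      (h (k + 1) _ _ (by simp) ?_)
    rw [hT]
    push_cast
    rfl


/-- For `n ≥ 4`, the graph whose vertices are the 2-element subsets of
`ℤ/nℤ`, with edges `{i,j} — {i,j+1}` (for `i ∉ {j,j+1}`) and `{i-1,i} — {i,i+1}`, is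
connected. -/
theorem stmt14 (n : ℕ) (hn : 4 ≤ n) :
    (SimpleGraph.fromRel
      (fun S T : {S : Finset (ZMod n) // S.card = 2} =>
        (∃ i j : ZMod n, i ∉ ({j, j + 1} : Finset (ZMod n)) ∧
          (S : Finset (ZMod n)) = {i, j} ∧ (T : Finset (ZMod n)) = {i, j + 1}) ∨
        (∃ i : ZMod n,
          (S : Finset (ZMod n)) = {i - 1, i} ∧
            (T : Finset (ZMod n)) = {i, i + 1}))).Connected := by
  haveI : NeZero n := ⟨by omega⟩
  have h01 : ∀ a : ZMod n, a ≠ a + 1 := fun a => by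
    simpa using natCast_succ_ne_zero (n := n) (k := 0) (by omega)
  -- `fromRel` discards loops, which are harmless for reachability.
  have key : ∀ {V : Type} (r : V → V → Prop) (S T : V), r S T →
      (SimpleGraph.fromRel r).Reachable S T := by
    intro V r S T hr
    by_cases hST : S = T
    · rw [hST]
    · exact SimpleGraph.Adj.reachable ((SimpleGraph.fromRel_adj r S T).2 ⟨hST, Or.inl hr⟩)
  have hbase : (({0, 1} : Finset (ZMod n))).card = 2 :=
    Finset.card_pair (by simpa using h01 0)
  rw [SimpleGraph.connected_iff_exists_forall_reachable]
  refine ⟨⟨{0, 1}, hbase⟩, fun T => ?_⟩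
  obtain ⟨a, b, hab, hT⟩ := Finset.card_eq_two.1 T.2
  have hpos : (b - a).val ≠ 0 := by
    rw [Ne, ZMod.val_eq_zero, sub_eq_zero]
    exact hab.symm
  obtain ⟨k, hk⟩ := Nat.exists_eq_succ_of_ne_zero hpos
  have hkn : k + 1 < n := by
    have := ZMod.val_lt (b - a)
    omega
  have hb : b = a + ((k : ZMod n) + 1) := by
    have := ZMod.natCast_zmod_val (b - a)
    rw [hk] at this
    push_cast at this
    rw [this]
    ring
  refine (reachable_consecutive (by omega) _ ?_ _ rfl a.val
    ⟨{a, a + 1}, Finset.card_pair (h01 a)⟩ ?_).trans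
    (reachable_of_pair _ ?_ a _ rfl k hkn T (by rw [hT, hb]))
  · intro i S T hS hT
    exact key _ S T (Or.inr ⟨i, hS, hT⟩)
  · rw [ZMod.natCast_zmod_val]
  · intro i j h1 h2 S T hS hT
    exact key _ S T (Or.inl ⟨i, j, by simp [h1, h2], hS, hT⟩)
end

section
/- Let n ≥ 2 and let X ∈ ℝ^{2×n} have columns x_1,…,x_n ∈ ℝ². Define σ(X) ∈ ℝ^{2×n} to be the matrix with columns −x_n, x_1, x_2, …, x_{n−1}. If X is totally nonnegative then σ(X) is totally nonnegative, and if X is totally positive then σ(X) is totally positive. -/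
/-- `X ∈ ℝ^{2×n}` is totally positive: every `2×2` minor formed by columns `i<j`
is positive. -/
def IsTotallyPositive2 {n : ℕ} (X : Matrix (Fin 2) (Fin n) ℝ) : Prop :=
  ∀ i j : Fin n, i < j → 0 < X 0 i * X 1 j - X 0 j * X 1 i

/-- Let `n ≥ 2` and `X ∈ ℝ^{2×n}` with columns `x₁, …, xₙ`. Let `σ(X)` be
the matrix with columns `−xₙ, x₁, …, x_{n−1}`. If `X` is totally nonnegative then so is
`σ(X)`, and if `X` is totally positive then so is `σ(X)`. -/
theorem stmt15 (n : ℕ) (hn : 2 ≤ n)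
    (X σX : Matrix (Fin 2) (Fin n) ℝ)
    (hσ : ∀ (r : Fin 2) (c : Fin n),
      σX r c = if (c : ℕ) = 0 then -X r ⟨n - 1, by omega⟩ else X r ⟨(c : ℕ) - 1, by omega⟩) :
    (IsTotallyNonneg2 X → IsTotallyNonneg2 σX) ∧
    (IsTotallyPositive2 X → IsTotallyPositive2 σX) := by
  have key : ∀ i j : Fin n, i < j → ∃ i' j' : Fin n, i' < j' ∧
      σX 0 i * σX 1 j - σX 0 j * σX 1 i = X 0 i' * X 1 j' - X 0 j' * X 1 i' := by
    intro i j hij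
    have hij' : (i : ℕ) < j := hij
    have hj : (j : ℕ) ≠ 0 := by omega
    by_cases hi : (i : ℕ) = 0
    · refine ⟨⟨(j : ℕ) - 1, by omega⟩, ⟨n - 1, by omega⟩, Fin.mk_lt_mk.2 (by omega), ?_⟩
      simp only [hσ, hi, hj, if_true, if_false]
      ring
    · refine ⟨⟨(i : ℕ) - 1, by omega⟩, ⟨(j : ℕ) - 1, by omega⟩, Fin.mk_lt_mk.2 (by omega), ?_⟩
      simp only [hσ, hi, hj, if_false]
  constructor <;>
  · intro h i j hij
    obtain ⟨i', j', hlt, heq⟩ := key i j hij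
    rw [heq]
    exact h i' j' hlt
end
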